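/- Let s ≥ 1 be an integer, q₀ = 2^s and q = 2q₀². Define φ : {0,…,q²−q} → ℕ as follows. For 0 ≤ i ≤ q(q−2)/2, write i = lq + kq₀ + j with 0 ≤ j ≤ q₀−1, 0 ≤ k ≤ 2q₀−1, l ≥ 0, and set φ(i) = l if j = 0 and k = 0; φ(i) = l + 1 + max{q − q₀(k+2l+2), 0} if j = 0 and k ≠ 0; φ(i) = l + 1 + max{q − q₀(⌈k/2⌉+j+l+1), 0} if j ≠ 0. For q(q−2)/2 + 1 ≤ i ≤ q²−q, write q² − q − i = lq + kq₀ + j with 0 ≤ j ≤ q₀−1, 0 ≤ k ≤ 2q₀−1, l ≥ 0, and set φ(i) = q − l − 1 − max{q − q₀(k+2l+1), 0} if j = q₀−1; φ(i) = q − l − 1 − max{q − q₀(⌈k/2⌉+j+l+1), 0} if j ≠ q₀−1. Then the sum of φ(i) over all integers i with 0 ≤ i ≤ q² − q equals q(q−1)²/2. -/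

import Mathlib

lemma aux_mul (f : ℕ → ℤ) (a b : ℕ) : ∑ i ∈ Finset.range (a * b), f i =
    ∑ x ∈ Finset.range a, ∑ y ∈ Finset.range b, f (x * b + y) := by
  induction a with
  | zero => simp
  | succ a ih => rw [Nat.succ_mul, Finset.sum_range_add, ih, Finset.sum_range_succ]

lemma aux_shift (F : ℕ → ℤ) (N m : ℕ) : ∑ l ∈ Finset.range N, (F (l + m) - F l) =
    ∑ l ∈ Finset.range m, (F (N + l) - F l) := by
  rw [Finset.sum_sub_distrib, Finset.sum_sub_distrib]
  have h1 := Finset.sum_range_add F N m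
  have h2 := Finset.sum_range_add F m N
  rw [Nat.add_comm m N] at h2
  have h3 : ∑ l ∈ Finset.range N, F (l + m) = ∑ l ∈ Finset.range N, F (m + l) :=
    Finset.sum_congr rfl fun l _ => by rw [Nat.add_comm]
  rw [h3]; linarith

lemma aux_ceil (n : ℕ) : ∑ k ∈ Finset.range (2 * n), (((k + 1) / 2 : ℕ) : ℤ) = (n : ℤ) ^ 2 := by
  induction n with
  | zero => simp
  | succ n ih =>
    rw [Nat.mul_succ, Finset.sum_range_succ, Finset.sum_range_succ, ih,
      show (2 * n + 1) / 2 = n by omega, show (2 * n + 1 + 1) / 2 = n + 1 by omega]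
    push_cast; ring

lemma aux_gauss (m : ℕ) : 2 * ∑ l ∈ Finset.range m, (l : ℤ) = m * (m - 1) := by
  induction m with
  | zero => simp
  | succ n ih => rw [Finset.sum_range_succ, mul_add, ih]; push_cast; ring

lemma aux_pair (F : ℕ → ℤ) (N : ℕ) : ∑ l ∈ Finset.range N, (F (2 * l) + F (2 * l + 1)) =
    ∑ i ∈ Finset.range (2 * N), F i := by
  induction N with
  | zero => simp
  | succ n ih =>
    rw [Nat.mul_succ, Finset.sum_range_succ, Finset.sum_range_succ, Finset.sum_range_succ, ih]; ring

/-- S1 -/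
lemma aux_S1 (n : ℕ) (hn : 1 ≤ n) : ∑ l ∈ Finset.range (n ^ 2),
    (((2 * n - (2 * l + 1) : ℕ) : ℤ) + ((2 * n - (2 * l + 2) : ℕ) : ℤ)) = n * (2 * n - 1) := by
  have h := aux_pair (fun i => ((2 * n - (i + 1) : ℕ) : ℤ)) (n ^ 2)
  simp only [Nat.add_assoc, Nat.reduceAdd] at h
  rw [h]
  obtain ⟨d, hd⟩ : ∃ d, 2 * n ^ 2 = 2 * n + d := ⟨2 * n ^ 2 - 2 * n, by
    have : n ≤ n ^ 2 := by nlinarith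
    omega⟩
  rw [hd, Finset.sum_range_add, Finset.sum_eq_zero (s := Finset.range d)
    (fun x _ => by rw [show 2 * n - (2 * n + x + 1) = 0 by omega]; rfl), add_zero]
  have h2 : ∑ x ∈ Finset.range (2 * n), ((2 * n - (x + 1) : ℕ) : ℤ) =
      ∑ x ∈ Finset.range (2 * n), ((2 * n : ℤ) - 1 - x) := by
    refine Finset.sum_congr rfl fun x hx => ?_
    rw [Finset.mem_range] at hx
    omega
  rw [h2, Finset.sum_sub_distrib]
  have h3 := aux_gauss (2 * n)
  simp only [Finset.sum_const, Finset.card_range, nsmul_eq_mul]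
  push_cast at h3 ⊢
  linarith

lemma aux_S2 (m : ℕ) : ∑ l ∈ Finset.range ((m + 1) ^ 2), ∑ k ∈ Finset.range (2 * (m + 1)),
    (((2 * (m + 1) - ((k + 1) / 2 + m + l + 1) : ℕ) : ℤ) -
      ((2 * (m + 1) - ((k + 1) / 2 + 0 + l + 1) : ℕ) : ℤ)) = - (2 * (m + 1) * (m + 1) * m) := by
  rw [Finset.sum_comm]
  have h1 : ∀ k ∈ Finset.range (2 * (m + 1)), ∑ l ∈ Finset.range ((m + 1) ^ 2),
    (((2 * (m + 1) - ((k + 1) / 2 + m + l + 1) : ℕ) : ℤ) -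
      ((2 * (m + 1) - ((k + 1) / 2 + 0 + l + 1) : ℕ) : ℤ)) =
      m * (((k + 1) / 2 : ℕ) : ℤ) + (∑ l ∈ Finset.range m, (l : ℤ) - m * (2 * m + 1)) := by
    intro k hk
    rw [Finset.mem_range] at hk
    have h := aux_shift (fun l => ((2 * (m + 1) - ((k + 1) / 2 + l + 1) : ℕ) : ℤ)) ((m + 1) ^ 2) m
    have e : ∀ l, (k + 1) / 2 + m + l + 1 = (k + 1) / 2 + (l + m) + 1 := fun l => by ring
    simp only [e, add_zero]
    rw [h]
    have h2 : ∀ l ∈ Finset.range m, (((2 * (m + 1) - ((k + 1) / 2 + ((m + 1) ^ 2 + l) + 1) : ℕ) : ℤ) -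
      ((2 * (m + 1) - ((k + 1) / 2 + l + 1) : ℕ) : ℤ)) =
        (l : ℤ) + ((((k + 1) / 2 : ℕ) : ℤ) - (2 * m + 1)) := by
      intro l hl
      rw [Finset.mem_range] at hl
      have : 2 * (m + 1) ≤ (m + 1) ^ 2 + 1 := by nlinarith
      generalize (m + 1) ^ 2 = M at *
      omega
    rw [Finset.sum_congr rfl h2, Finset.sum_add_distrib]
    simp only [Finset.sum_const, Finset.card_range, nsmul_eq_mul]
    ring
  rw [Finset.sum_congr rfl h1, Finset.sum_add_distrib, ← Finset.mul_sum, aux_ceil]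
  have := aux_gauss m
  simp only [Finset.sum_const, Finset.card_range, nsmul_eq_mul]
  push_cast
  linear_combination (m + 1 : ℤ) * this

/-- low value -/
def gL (n l k j : ℕ) : ℤ := (l : ℤ) + 1 +
  (if j = 0 then (n : ℤ) * ((2 * n - (k + 2 * l + 2) : ℕ) : ℤ)
    else (n : ℤ) * ((2 * n - ((k + 1) / 2 + j + l + 1) : ℕ) : ℤ))
  - (if k = 0 then (if j = 0 then 1 + (n : ℤ) * ((2 * n - (2 * l + 2) : ℕ) : ℤ) else 0) else 0)

/-- high value -/
def gH (n l k j : ℕ) : ℤ := 2 * (n : ℤ) ^ 2 - l - 1 -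
  (if j = n - 1 then (n : ℤ) * ((2 * n - (k + 2 * l + 1) : ℕ) : ℤ)
    else (n : ℤ) * ((2 * n - ((k + 1) / 2 + j + l + 1) : ℕ) : ℤ))

lemma aux_cell (m l k : ℕ) : ∑ j ∈ Finset.range (m + 1), (gL (m + 1) l k j + gH (m + 1) l k j) =
    2 * ((m : ℤ) + 1) ^ 3
    + (m + 1) * (((2 * (m + 1) - ((k + 1) + 2 * l + 1) : ℕ) : ℤ)
        - ((2 * (m + 1) - (k + 2 * l + 1) : ℕ) : ℤ))
    + (m + 1) * (((2 * (m + 1) - ((k + 1) / 2 + m + l + 1) : ℕ) : ℤ) -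
      ((2 * (m + 1) - ((k + 1) / 2 + 0 + l + 1) : ℕ) : ℤ))
    - (if k = 0 then 1 + (m + 1 : ℤ) * ((2 * (m + 1) - (2 * l + 2) : ℕ) : ℤ) else 0) := by
  have hL : ∑ j ∈ Finset.range (m + 1), gL (m + 1) l k j = (m + 1) * ((l : ℤ) + 1)
      + (m + 1) * ((2 * (m + 1) - ((k + 1) + 2 * l + 1) : ℕ) : ℤ)
      + ∑ j ∈ Finset.range m, (m + 1) * ((2 * (m + 1) - ((k + 1) / 2 + (j + 1) + l + 1) : ℕ) : ℤ)
      - (if k = 0 then 1 + (m + 1 : ℤ) * ((2 * (m + 1) - (2 * l + 2) : ℕ) : ℤ) else 0) := by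
    rw [Finset.sum_range_succ']
    simp only [gL, Nat.succ_ne_zero, if_false, if_true, ite_self, sub_zero, Finset.sum_add_distrib,
      Finset.sum_const, Finset.card_range, nsmul_eq_mul]
    rw [show k + 1 + 2 * l + 1 = k + 2 * l + 2 by ring]
    push_cast
    ring
  have hH : ∑ j ∈ Finset.range (m + 1), gH (m + 1) l k j =
      (m + 1) * (2 * ((m : ℤ) + 1) ^ 2 - l - 1)
      - (m + 1) * ((2 * (m + 1) - (k + 2 * l + 1) : ℕ) : ℤ)
      - ∑ j ∈ Finset.range m, (m + 1) * ((2 * (m + 1) - ((k + 1) / 2 + j + l + 1) : ℕ) : ℤ) := by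
    rw [Finset.sum_range_succ]
    have : ∀ j ∈ Finset.range m, gH (m + 1) l k j = (2 * ((m : ℤ) + 1) ^ 2 - l - 1) -
        (m + 1) * ((2 * (m + 1) - ((k + 1) / 2 + j + l + 1) : ℕ) : ℤ) := by
      intro j hj
      rw [Finset.mem_range] at hj
      rw [gH, if_neg (by omega)]
      push_cast; ring
    rw [Finset.sum_congr rfl this, Finset.sum_sub_distrib, gH, if_pos (by omega)]
    simp only [Finset.sum_const, Finset.card_range, nsmul_eq_mul]
    push_cast
    ring
  have ht := Finset.sum_range_sub (fun j => (m + 1 : ℤ) *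
    ((2 * (m + 1) - ((k + 1) / 2 + j + l + 1) : ℕ) : ℤ)) m
  rw [Finset.sum_sub_distrib] at ht
  rw [Finset.sum_add_distrib, hL, hH]
  linear_combination ht

lemma aux_row (m l : ℕ) : ∑ k ∈ Finset.range (2 * (m + 1)), ∑ j ∈ Finset.range (m + 1),
      (gL (m + 1) l k j + gH (m + 1) l k j) =
    (4 * ((m : ℤ) + 1) ^ 4 - 1)
    + (m + 1) * (∑ k ∈ Finset.range (2 * (m + 1)),
      (((2 * (m + 1) - ((k + 1) / 2 + m + l + 1) : ℕ) : ℤ) -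
      ((2 * (m + 1) - ((k + 1) / 2 + 0 + l + 1) : ℕ) : ℤ)))
    - (m + 1) * (((2 * (m + 1) - (2 * l + 1) : ℕ) : ℤ) + ((2 * (m + 1) - (2 * l + 2) : ℕ) : ℤ)) := by
  simp only [aux_cell]
  have ht := Finset.sum_range_sub (fun k => ((2 * (m + 1) - (k + 2 * l + 1) : ℕ) : ℤ)) (2 * (m + 1))
  have h0 : 2 * (m + 1) - (2 * (m + 1) + 2 * l + 1) = 0 := by omega
  simp only [h0, zero_add] at ht
  rw [Finset.sum_sub_distrib, Finset.sum_add_distrib, Finset.sum_add_distrib, ← Finset.mul_sum,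
    ← Finset.mul_sum, ← Finset.mul_sum, ht, Finset.sum_ite_eq' (Finset.range (2 * (m + 1))) 0,
    if_pos (by simp)]
  simp only [Finset.sum_const, Finset.card_range, nsmul_eq_mul]
  push_cast
  ring

lemma aux_box (m : ℕ) : ∑ l ∈ Finset.range ((m + 1) ^ 2), ∑ k ∈ Finset.range (2 * (m + 1)),
    ∑ j ∈ Finset.range (m + 1), (gL (m + 1) l k j + gH (m + 1) l k j) =
    4 * ((m : ℤ) + 1) ^ 6 - 2 * ((m : ℤ) + 1) ^ 4 := by
  simp only [aux_row]
  have h1 := aux_S1 (m + 1) (by omega)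
  have h2 := aux_S2 m
  rw [Finset.sum_sub_distrib, Finset.sum_add_distrib, ← Finset.mul_sum,
    ← Finset.mul_sum, h1, h2]
  simp only [Finset.sum_const, Finset.card_range, nsmul_eq_mul]
  push_cast
  ring

lemma aux_last (m p : ℕ) (hm : 1 ≤ m) (hp : (m + 1) ^ 2 = p + 1) :
    ∑ k ∈ Finset.range (2 * (m + 1)), ∑ j ∈ Finset.range (m + 1), gL (m + 1) p k j =
    2 * ((p : ℤ) + 1) ^ 2 - 1 := by
  have hb : 2 * (m + 1) ≤ p + 1 := by nlinarith
  have : ∀ k j, gL (m + 1) p k j = (p : ℤ) + 1 - (if k = 0 then (if j = 0 then 1 else 0) else 0) := by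
    intro k j
    rw [gL, show 2 * (m + 1) - (k + 2 * p + 2) = 0 by omega,
      show 2 * (m + 1) - ((k + 1) / 2 + j + p + 1) = 0 by omega,
      show 2 * (m + 1) - (2 * p + 2) = 0 by omega]
    simp
  have hp' : ((m : ℤ) + 1) ^ 2 = p + 1 := by exact_mod_cast hp
  have e : ∀ k : ℕ, ∑ j ∈ Finset.range (m + 1), gL (m + 1) p k j =
      (m + 1) * ((p : ℤ) + 1) - (if k = 0 then 1 else 0) := by
    intro k
    simp only [this]
    rw [Finset.sum_sub_distrib]
    split_ifs <;> simp
  simp only [e]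
  rw [Finset.sum_sub_distrib, Finset.sum_ite_eq' (Finset.range (2 * (m + 1))) 0,
    if_pos (by simp)]
  simp only [Finset.sum_const, Finset.card_range, nsmul_eq_mul]
  push_cast
  linear_combination 2 * (p + 1 : ℤ) * hp'

/-- The sum of `φ(i)` over all `0 ≤ i ≤ q² − q` equals `q(q−1)²/2`.
The function `φ` is characterized via the unique decomposition
`n = lq + kq₀ + j` with `0 ≤ j ≤ q₀−1`, `0 ≤ k ≤ 2q₀−1`, `l ≥ 0`:
for `0 ≤ i ≤ q(q−2)/2` one decomposes `i` itself, and for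
`q(q−2)/2 + 1 ≤ i ≤ q² − q` one decomposes `q² − q − i`.
Here `max{x − y, 0}` for naturals is truncated subtraction `x - y`, and
`⌈k/2⌉ = (k+1)/2`. -/
theorem stmt_9 (s : ℕ) (hs : 1 ≤ s) (q₀ q : ℕ)
    (hq₀ : q₀ = 2 ^ s) (hq : q = 2 * q₀ ^ 2)
    (φ : ℕ → ℕ)
    (hφlow : ∀ i l k j : ℕ, i ≤ q * (q - 2) / 2 → i = l * q + k * q₀ + j →
      j + 1 ≤ q₀ → k + 1 ≤ 2 * q₀ →
      φ i = if j = 0 ∧ k = 0 then l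
            else if j = 0 then l + 1 + (q - q₀ * (k + 2 * l + 2))
            else l + 1 + (q - q₀ * ((k + 1) / 2 + j + l + 1)))
    (hφhigh : ∀ i l k j : ℕ, q * (q - 2) / 2 + 1 ≤ i → i ≤ q ^ 2 - q →
      q ^ 2 - q - i = l * q + k * q₀ + j →
      j + 1 ≤ q₀ → k + 1 ≤ 2 * q₀ →
      φ i = if j = q₀ - 1 then q - l - 1 - (q - q₀ * (k + 2 * l + 1))
            else q - l - 1 - (q - q₀ * ((k + 1) / 2 + j + l + 1))) :
    ∑ i ∈ Finset.range (q ^ 2 - q + 1), φ i = q * (q - 1) ^ 2 / 2 := by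
  obtain ⟨m, rfl⟩ : ∃ m, q₀ = m + 1 := ⟨q₀ - 1, by
    have := Nat.one_le_two_pow (n := s); omega⟩
  have hm : 1 ≤ m := by
    have : 2 ^ 1 ≤ 2 ^ s := Nat.pow_le_pow_right (by norm_num) hs
    omega
  clear hq₀ hs s
  obtain ⟨p, hp⟩ : ∃ p, (m + 1) ^ 2 = p + 1 := ⟨(m + 1) ^ 2 - 1, by
    have : 0 < (m + 1) ^ 2 := by positivity
    omega⟩
  have hq2 : q = 2 * p + 2 := by omega
  have hp' : ((m : ℤ) + 1) ^ 2 = p + 1 := by exact_mod_cast hp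
  have hqm : q = 2 * (m + 1) * (m + 1) := by rw [hq]; ring
  have hM : q * (q - 2) / 2 = p * q := by
    rw [show q - 2 = 2 * p by omega, show q * (2 * p) = 2 * (p * q) by ring]
    exact Nat.mul_div_cancel_left _ (by norm_num)
  have hQ : q ^ 2 - q = p * q + (p + 1) * q := by
    rw [Nat.sub_eq_iff_eq_add (by nlinarith)]
    nlinarith
  rw [hM] at hφlow hφhigh
  rw [hQ] at hφhigh ⊢
  have hsub : ∀ x, q - (m + 1) * x = (m + 1) * (2 * (m + 1) - x) := by
    intro x
    rw [Nat.mul_sub, hqm]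
    congr 1
    ring
  have hdec : ∀ l k j : ℕ, j < m + 1 → k < 2 * (m + 1) →
      k * (m + 1) + j + 1 ≤ q := by
    intro l k j hj hk
    rw [hqm]
    nlinarith
  have hlow : ∀ l k j : ℕ, l < p → j < m + 1 → k < 2 * (m + 1) →
      (φ (l * q + (k * (m + 1) + j)) : ℤ) = gL (m + 1) l k j := by
    intro l k j hl hj hk
    have h1 := hdec l k j hj hk
    have h2 : (l + 1) * q ≤ p * q := Nat.mul_le_mul_right _ hl
    rw [hφlow _ l k j (by nlinarith) (by ring) hj hk]
    simp only [hsub, gL]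
    by_cases hj0 : j = 0
    · by_cases hk0 : k = 0
      · simp [hj0, hk0]
      · simp [hj0, hk0]
    · simp [hj0]
  have hhigh : ∀ l k j : ℕ, l < p + 1 → j < m + 1 → k < 2 * (m + 1) →
      (φ (p * q + (p + 1) * q - (l * q + (k * (m + 1) + j))) : ℤ) = gH (m + 1) l k j := by
    intro l k j hl hj hk
    have h1 := hdec l k j hj hk
    have h2 : (l + 1) * q ≤ (p + 1) * q := Nat.mul_le_mul_right _ hl
    have h3 : l * q + (k * (m + 1) + j) + 1 ≤ (p + 1) * q := by nlinarith
    rw [hφhigh _ l k j (by omega) (by omega)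
      (by rw [Nat.sub_sub_self (by omega)]; ring) hj hk]
    have key : ∀ x, l + 1 ≤ x → ((q - l - 1 - (q - (m + 1) * x) : ℕ) : ℤ) =
        2 * ((m : ℤ) + 1) ^ 2 - l - 1 - (m + 1) * ((2 * (m + 1) - x : ℕ) : ℤ) := by
      intro x hx
      have hx2 : l + 1 ≤ (m + 1) * x := by nlinarith
      have e : ((m + 1 : ℤ)) * ((2 * (m + 1) - x : ℕ) : ℤ) = ((q - (m + 1) * x : ℕ) : ℤ) := by
        rw [hsub]; push_cast; ring
      rw [e, hp']
      generalize (m + 1) * x = y at *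
      omega
    rw [gH]
    split_ifs
    · rw [key _ (by omega)]; push_cast; ring
    · rw [key _ (by omega)]; push_cast; ring
  have hlast : (φ (p * q) : ℤ) = p := by
    rw [hφlow _ p 0 0 le_rfl (by ring) (by omega) (by omega)]
    simp
  have hbox : ∀ (a : ℕ) (f : ℕ → ℤ), ∑ i ∈ Finset.range (a * q), f i =
      ∑ l ∈ Finset.range a, ∑ k ∈ Finset.range (2 * (m + 1)), ∑ j ∈ Finset.range (m + 1),
        f (l * q + (k * (m + 1) + j)) := by
    intro a f
    rw [aux_mul]
    refine Finset.sum_congr rfl fun l _ => ?_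
    conv_lhs => rw [hqm]
    rw [aux_mul (fun y => f (l * (2 * (m + 1) * (m + 1)) + y)), ← hqm]
  have hA : ∑ i ∈ Finset.range (p * q), (φ i : ℤ) = ∑ l ∈ Finset.range p,
      ∑ k ∈ Finset.range (2 * (m + 1)), ∑ j ∈ Finset.range (m + 1), gL (m + 1) l k j := by
    rw [hbox p (fun i => (φ i : ℤ))]
    refine Finset.sum_congr rfl fun l hl => Finset.sum_congr rfl fun k hk =>
      Finset.sum_congr rfl fun j hj => ?_
    exact hlow l k j (Finset.mem_range.1 hl) (Finset.mem_range.1 hj) (Finset.mem_range.1 hk)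
  have hB : ∑ i ∈ Finset.range ((p + 1) * q), (φ (p * q + 1 + i) : ℤ) =
      ∑ l ∈ Finset.range (p + 1),
      ∑ k ∈ Finset.range (2 * (m + 1)), ∑ j ∈ Finset.range (m + 1), gH (m + 1) l k j := by
    rw [← Finset.sum_range_reflect]
    have : ∀ i ∈ Finset.range ((p + 1) * q), (φ (p * q + 1 + ((p + 1) * q - 1 - i)) : ℤ) =
        (fun i => (φ (p * q + (p + 1) * q - i) : ℤ)) i := by
      intro i hi
      rw [Finset.mem_range] at hi
      simp only
      congr 2
      omega
    rw [Finset.sum_congr rfl this, hbox]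
    refine Finset.sum_congr rfl fun l hl => Finset.sum_congr rfl fun k hk =>
      Finset.sum_congr rfl fun j hj => ?_
    exact hhigh l k j (Finset.mem_range.1 hl) (Finset.mem_range.1 hj) (Finset.mem_range.1 hk)
  have hbx := aux_box m
  simp only [Finset.sum_add_distrib] at hbx
  rw [hp, Finset.sum_range_succ, aux_last m p hm hp, ← hA, ← hB] at hbx
  have htot : ∑ i ∈ Finset.range (p * q + (p + 1) * q + 1), (φ i : ℤ) =
      ((p + 1) * (2 * p + 1) ^ 2 : ℕ) := by
    rw [show p * q + (p + 1) * q + 1 = p * q + 1 + (p + 1) * q by ring, Finset.sum_range_add,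
      Finset.sum_range_succ, hlast]
    have h4 : ((m : ℤ) + 1) ^ 4 = (p + 1) ^ 2 := by rw [← hp']; ring
    have h6 : ((m : ℤ) + 1) ^ 6 = (p + 1) ^ 3 := by rw [← hp']; ring
    rw [h4, h6] at hbx
    push_cast
    linear_combination hbx
  have hR : q * (q - 1) ^ 2 / 2 = (p + 1) * (2 * p + 1) ^ 2 := by
    rw [show q - 1 = 2 * p + 1 by omega,
      show q * (2 * p + 1) ^ 2 = 2 * ((p + 1) * (2 * p + 1) ^ 2) by rw [hq2]; ring]
    exact Nat.mul_div_cancel_left _ (by norm_num)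
  rw [hR]
  exact_mod_cast htot
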